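/- arXiv:1804.04951 — 2 statements merged into one kernel-verified Lean document; each statement's English description precedes it below -/
import Mathlib

section
/- Let φ : V → W be a linear map between finite-dimensional real vector spaces and D_W a linear Dirac structure on W. Then the backward B φ(D_W) = {(v, φ*(w*)) ∈ V ⊕ V* : (φ(v), w*) ∈ D_W} is a linear Dirac structure on V. -/
/-!
Taking orthogonals commutes with the backward image, for every subspace `D` of `W ⊕ W*`; a
subspace equal to its own orthogonal is therefore pulled back to one with the same property.

One inclusion holds because `(u, φ* γ)` and `(φ u, γ)` pair in the same way on both sides. For the
other, let `(v, α)` be orthogonal to the backward image of `D`. The functional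
`(u, γ) ↦ α u + γ (φ v)` on `V ⊕ W*` vanishes on the preimage of `D` under `φ × id`, so it factors
through a functional `g` on `W ⊕ W*` vanishing on `D`. Since `g (0, γ) = γ (φ v)`, the functional
`g` is the pairing with `(φ v, β)`, where `β` is the restriction of `g` to `W`; hence `(φ v, β)` is
orthogonal to `D`, and `φ* β = α`.
-/

open Module

def pairLR {V : Type*} [AddCommGroup V] [Module ℝ V]
    (x y : V × Module.Dual ℝ V) : ℝ := x.2 y.1 + y.2 x.1

def orthSet {V : Type*} [AddCommGroup V] [Module ℝ V]
    (D : Submodule ℝ (V × Module.Dual ℝ V)) : Set (V × Module.Dual ℝ V) :=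
  {x | ∀ y ∈ D, pairLR x y = 0}

def IsDirac {V : Type*} [AddCommGroup V] [Module ℝ V]
    (D : Submodule ℝ (V × Module.Dual ℝ V)) : Prop :=
  (D : Set (V × Module.Dual ℝ V)) = orthSet D

def backwardD {V W : Type*} [AddCommGroup V] [Module ℝ V] [AddCommGroup W] [Module ℝ W]
    (φ : V →ₗ[ℝ] W) (D : Submodule ℝ (W × Module.Dual ℝ W)) :
    Submodule ℝ (V × Module.Dual ℝ V) :=
  Submodule.map ((LinearMap.id : V →ₗ[ℝ] V).prodMap φ.dualMap)
    (Submodule.comap (φ.prodMap (LinearMap.id : Module.Dual ℝ W →ₗ[ℝ] Module.Dual ℝ W)) D)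

theorem dualAnnihilator_comap_eq_map_dualMap {K E F : Type*} [Field K] [AddCommGroup E]
    [Module K E] [AddCommGroup F] [Module K F] (f : E →ₗ[K] F) (D : Submodule K F) :
    (D.comap f).dualAnnihilator = D.dualAnnihilator.map f.dualMap :=
  calc (D.comap f).dualAnnihilator
      = (LinearMap.ker (D.mkQ ∘ₗ f)).dualAnnihilator := by rw [LinearMap.ker_comp, D.ker_mkQ]
    _ = LinearMap.range (D.mkQ ∘ₗ f).dualMap :=
        (LinearMap.range_dualMap_eq_dualAnnihilator_ker _).symm
    _ = (LinearMap.range D.mkQ.dualMap).map f.dualMap := by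
        rw [← LinearMap.dualMap_comp_dualMap, LinearMap.range_comp]
    _ = D.dualAnnihilator.map f.dualMap := by rw [D.range_dualMap_mkQ_eq]

section

variable {V W : Type*} [AddCommGroup V] [Module ℝ V] [AddCommGroup W] [Module ℝ W]

/-- The orthogonal of a subspace `D` of `V ⊕ V*` for the pairing `pairLR`, that is, `orthSet D`
regarded as a subspace, so that `backwardD` can be applied to it. -/
def orthSubmodule (D : Submodule ℝ (V × Dual ℝ V)) : Submodule ℝ (V × Dual ℝ V) where
  carrier := orthSet D
  zero_mem' y _ := by simp [pairLR]
  add_mem' {x x'} hx hx' y hy := by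
    calc pairLR (x + x') y = pairLR x y + pairLR x' y := by
          simp only [pairLR, Prod.fst_add, Prod.snd_add, LinearMap.add_apply, map_add]; ring
      _ = 0 := by rw [hx y hy, hx' y hy, add_zero]
  smul_mem' c x hx y hy := by
    calc pairLR (c • x) y = c * pairLR x y := by
          simp only [pairLR, Prod.smul_fst, Prod.smul_snd, LinearMap.smul_apply, map_smul,
            smul_eq_mul, mul_add]
      _ = 0 := by rw [hx y hy, mul_zero]

theorem mem_orthSubmodule {D : Submodule ℝ (V × Dual ℝ V)} {x : V × Dual ℝ V} :
    x ∈ orthSubmodule D ↔ ∀ y ∈ D, pairLR x y = 0 :=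
  Iff.rfl

theorem isDirac_iff_eq_orthSubmodule {D : Submodule ℝ (V × Dual ℝ V)} :
    IsDirac D ↔ D = orthSubmodule D :=
  SetLike.coe_set_eq (q := orthSubmodule D)

theorem mem_backwardD {φ : V →ₗ[ℝ] W} {D : Submodule ℝ (W × Dual ℝ W)} {v : V} {α : Dual ℝ V} :
    (v, α) ∈ backwardD φ D ↔ ∃ β, (φ v, β) ∈ D ∧ φ.dualMap β = α := by
  simp [backwardD]

theorem pairLR_dualMap_dualMap (φ : V →ₗ[ℝ] W) (v u : V) (β γ : Dual ℝ W) :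
    pairLR (v, φ.dualMap β) (u, φ.dualMap γ) = pairLR (φ v, β) (φ u, γ) :=
  rfl

theorem dual_apply_eq_pairLR {g : Dual ℝ (V × Dual ℝ V)} {v : V} (hg : ∀ γ, g (0, γ) = γ v)
    (y : V × Dual ℝ V) : g y = pairLR (v, g ∘ₗ LinearMap.inl ℝ V (Dual ℝ V)) y := by
  calc g y = g (y.1, 0) + g (0, y.2) := by rw [← map_add, Prod.fst_add_snd]
    _ = g (y.1, 0) + y.2 v := by rw [hg]

theorem backwardD_orthSubmodule_le (φ : V →ₗ[ℝ] W) (D : Submodule ℝ (W × Dual ℝ W)) :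
    backwardD φ (orthSubmodule D) ≤ orthSubmodule (backwardD φ D) := by
  rintro ⟨v, _⟩ hv ⟨u, _⟩ hu
  obtain ⟨β, hβ, rfl⟩ := mem_backwardD.mp hv
  obtain ⟨γ, hγ, rfl⟩ := mem_backwardD.mp hu
  rw [pairLR_dualMap_dualMap]
  exact hβ _ hγ

theorem exists_dual_of_mem_orthSubmodule_backwardD {φ : V →ₗ[ℝ] W}
    {D : Submodule ℝ (W × Dual ℝ W)} {v : V} {α : Dual ℝ V}
    (h : (v, α) ∈ orthSubmodule (backwardD φ D)) :
    ∃ g ∈ D.dualAnnihilator, ∀ u γ, g (φ u, γ) = α u + γ (φ v) := by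
  let k : V × Dual ℝ W →ₗ[ℝ] W × Dual ℝ W := φ.prodMap LinearMap.id
  let f : Dual ℝ (V × Dual ℝ W) := α.coprod (Dual.eval ℝ W (φ v))
  have hf : f ∈ (D.comap k).dualAnnihilator := by
    rw [Submodule.mem_dualAnnihilator]
    rintro ⟨u, γ⟩ huγ
    exact h (u, φ.dualMap γ) (mem_backwardD.mpr ⟨γ, huγ, rfl⟩)
  rw [dualAnnihilator_comap_eq_map_dualMap] at hf
  obtain ⟨g, hgD, hgf⟩ := hf
  exact ⟨g, hgD, fun u γ => LinearMap.congr_fun hgf (u, γ)⟩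

theorem orthSubmodule_backwardD_le (φ : V →ₗ[ℝ] W) (D : Submodule ℝ (W × Dual ℝ W)) :
    orthSubmodule (backwardD φ D) ≤ backwardD φ (orthSubmodule D) := by
  rintro ⟨v, α⟩ h
  obtain ⟨g, hgD, hg⟩ := exists_dual_of_mem_orthSubmodule_backwardD h
  have hg_right (γ : Dual ℝ W) : g (0, γ) = γ (φ v) := by simpa using hg 0 γ
  have hg_left (u : V) : g (φ u, 0) = α u := by simpa using hg u 0
  refine mem_backwardD.mpr
    ⟨g ∘ₗ LinearMap.inl ℝ W (Dual ℝ W), mem_orthSubmodule.mpr fun y hy => ?_,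
      LinearMap.ext hg_left⟩
  rw [← dual_apply_eq_pairLR hg_right]
  exact (Submodule.mem_dualAnnihilator g).mp hgD y hy

theorem orthSubmodule_backwardD (φ : V →ₗ[ℝ] W) (D : Submodule ℝ (W × Dual ℝ W)) :
    orthSubmodule (backwardD φ D) = backwardD φ (orthSubmodule D) :=
  le_antisymm (orthSubmodule_backwardD_le φ D) (backwardD_orthSubmodule_le φ D)

end

theorem stmt8_general {V W : Type*} [AddCommGroup V] [Module ℝ V] [AddCommGroup W] [Module ℝ W]
    (φ : V →ₗ[ℝ] W) (D : Submodule ℝ (W × Dual ℝ W)) (hD : IsDirac D) :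
    IsDirac (backwardD φ D) := by
  rw [isDirac_iff_eq_orthSubmodule] at hD ⊢
  rw [orthSubmodule_backwardD, ← hD]

theorem stmt8 {V W : Type*} [AddCommGroup V] [Module ℝ V] [AddCommGroup W] [Module ℝ W]
    [FiniteDimensional ℝ V] [FiniteDimensional ℝ W]
    (φ : V →ₗ[ℝ] W) (D : Submodule ℝ (W × Module.Dual ℝ W)) (hD : IsDirac D) :
    IsDirac (backwardD φ D) :=
  stmt8_general φ D hD
end

section
/- Let φ : V → W be a linear map between finite-dimensional real vector spaces and D_V a linear Dirac structure on V. Then the forward F φ(D_V) = {(φ(v), w*) ∈ W ⊕ W* : (v, φ*(w*)) ∈ D_V} is a linear Dirac structure on W. -/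
open Module

def forwardD {V W : Type*} [AddCommGroup V] [Module ℝ V] [AddCommGroup W] [Module ℝ W]
    (φ : V →ₗ[ℝ] W) (D : Submodule ℝ (V × Module.Dual ℝ V)) :
    Submodule ℝ (W × Module.Dual ℝ W) :=
  Submodule.map (φ.prodMap (LinearMap.id : Module.Dual ℝ W →ₗ[ℝ] Module.Dual ℝ W))
    (Submodule.comap ((LinearMap.id : V →ₗ[ℝ] V).prodMap φ.dualMap) D)

/-!
Taking orthogonals commutes with the forward map: `(F φ D)ᗮ = F φ (Dᗮ)` for every subspace `D` of
`V ⊕ V*` when `ker φ` is finite-dimensional; a Dirac structure is the case `Dᗮ = D`. The inclusion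
`⊇` is the adjointness of `φ` and `φ*`. Conversely, an element of `(F φ D)ᗮ` is orthogonal to
`0 ⊕ (range φ)°`, so it has the form `(φ v, β)`; and since every covector vanishing on `ker φ` is of
the form `φ* γ`, the element `(v, φ* β)` is orthogonal to `D ∩ (ker φ ⊕ 0)ᗮ`. Because `ker φ ⊕ 0` is
finite-dimensional, the orthogonal of that intersection is `Dᗮ + (ker φ ⊕ 0)`, so `v` can be
corrected by an element of `ker φ` to bring `(v, φ* β)` into `Dᗮ`.
-/

section BilinForm

variable {K E : Type*} [Field K] [AddCommGroup E] [Module K E]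

theorem orthogonal_inf_orthogonal {B : LinearMap.BilinForm K E} (hB : B.IsRefl)
    (D F : Submodule K E) [FiniteDimensional K F] :
    B.orthogonal (D ⊓ B.orthogonal F) = B.orthogonal D ⊔ F := by
  let ρ : E →ₗ[K] Dual K D := D.subtype.dualMap ∘ₗ B
  have ker_ρ : LinearMap.ker ρ = B.orthogonal D := by
    ext x
    rw [LinearMap.mem_ker, LinearMap.ext_iff]
    exact ⟨fun h d hd => hB _ _ (h ⟨d, hd⟩), fun h d => hB _ _ (h d d.2)⟩
  have coannihilator_ρ : (F.map ρ).dualCoannihilator = (B.orthogonal F).comap D.subtype := by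
    ext d
    rw [Submodule.mem_dualCoannihilator]
    exact Set.forall_mem_image
  calc B.orthogonal (D ⊓ B.orthogonal F)
      = ((B.orthogonal F).comap D.subtype).dualAnnihilator.comap ρ := by
        ext x
        rw [Submodule.mem_comap, Submodule.mem_dualAnnihilator]
        exact ⟨fun h d hd => hB _ _ (h d ⟨d.2, hd⟩), fun h d hd => hB _ _ (h ⟨d, hd.1⟩ hd.2)⟩
    _ = (F.map ρ).comap ρ := by
        rw [← coannihilator_ρ, Subspace.dualCoannihilator_dualAnnihilator_eq]
    _ = B.orthogonal D ⊔ F := by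
        rw [Submodule.comap_map_eq, ker_ρ, sup_comm]

end BilinForm

section Pairing

variable {V : Type*} [AddCommGroup V] [Module ℝ V]

variable (V) in
/-- The pairing `pairLR` on `V ⊕ V*` as a bilinear form, which gives access to the orthogonals
`LinearMap.BilinForm.orthogonal`. -/
def pairForm : LinearMap.BilinForm ℝ (V × Dual ℝ V) :=
  LinearMap.mk₂ ℝ pairLR
    (fun x x' y => by
      simp only [pairLR, Prod.fst_add, Prod.snd_add, map_add, LinearMap.add_apply]
      ring)
    (fun c x y => by
      simp only [pairLR, Prod.smul_fst, Prod.smul_snd, map_smul, LinearMap.smul_apply, smul_add])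
    (fun x y y' => by
      simp only [pairLR, Prod.fst_add, Prod.snd_add, map_add, LinearMap.add_apply]
      ring)
    (fun c x y => by
      simp only [pairLR, Prod.smul_fst, Prod.smul_snd, map_smul, LinearMap.smul_apply, smul_add])

theorem pairForm_apply (x y : V × Dual ℝ V) : pairForm V x y = x.2 y.1 + y.2 x.1 := rfl

theorem pairForm_comm (x y : V × Dual ℝ V) : pairForm V x y = pairForm V y x := add_comm _ _

theorem isRefl_pairForm : (pairForm V).IsRefl := fun x y h => (pairForm_comm y x).trans h

theorem isDirac_iff_orthogonal_eq {D : Submodule ℝ (V × Dual ℝ V)} :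
    IsDirac D ↔ (pairForm V).orthogonal D = D := by
  have coe_orthogonal : ((pairForm V).orthogonal D : Set (V × Dual ℝ V)) = orthSet D :=
    Set.ext fun x => forall₂_congr fun y _ => by rw [pairForm_comm]; rfl
  rw [IsDirac, ← coe_orthogonal, SetLike.coe_set_eq, eq_comm]

theorem mem_orthogonal_map_inl {S : Submodule ℝ V} {x : V × Dual ℝ V} :
    x ∈ (pairForm V).orthogonal (S.map (LinearMap.inl ℝ V (Dual ℝ V))) ↔
      x.2 ∈ S.dualAnnihilator := by
  simp [pairForm_apply, Submodule.mem_dualAnnihilator]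

end Pairing

section Forward

variable {V W : Type*} [AddCommGroup V] [Module ℝ V] [AddCommGroup W] [Module ℝ W]
  {φ : V →ₗ[ℝ] W} {D : Submodule ℝ (V × Dual ℝ V)}

theorem pairForm_dualMap (φ : V →ₗ[ℝ] W) (v v' : V) (β γ : Dual ℝ W) :
    pairForm V (v, φ.dualMap β) (v', φ.dualMap γ) = pairForm W (φ v, β) (φ v', γ) := rfl

theorem mem_forwardD {w : W} {β : Dual ℝ W} :
    (w, β) ∈ forwardD φ D ↔ ∃ v, (v, φ.dualMap β) ∈ D ∧ φ v = w := by
  simp [forwardD]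

theorem mem_orthogonal_forwardD {x : W × Dual ℝ W} :
    x ∈ (pairForm W).orthogonal (forwardD φ D) ↔
      ∀ v γ, (v, φ.dualMap γ) ∈ D → pairForm W (φ v, γ) x = 0 :=
  ⟨fun h v γ hv => h (φ v, γ) (mem_forwardD.2 ⟨v, hv, rfl⟩), fun h ⟨w, γ⟩ hw => by
    obtain ⟨v, hv, rfl⟩ := mem_forwardD.1 hw
    exact h v γ hv⟩

theorem fst_mem_range_of_mem_orthogonal_forwardD {x : W × Dual ℝ W}
    (hx : x ∈ (pairForm W).orthogonal (forwardD φ D)) : x.1 ∈ LinearMap.range φ := by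
  rw [← Subspace.forall_mem_dualAnnihilator_apply_eq_zero_iff,
    ← LinearMap.ker_dualMap_eq_dualAnnihilator_range]
  intro γ hγ
  have zero_mem : ((0 : V), φ.dualMap γ) ∈ D := by
    rw [LinearMap.mem_ker.1 hγ]
    exact D.zero_mem
  simpa [pairForm_apply] using mem_orthogonal_forwardD.1 hx 0 γ zero_mem

theorem mem_orthogonal_inf_of_mem_orthogonal_forwardD {v : V} {β : Dual ℝ W}
    (h : (φ v, β) ∈ (pairForm W).orthogonal (forwardD φ D)) :
    (v, φ.dualMap β) ∈ (pairForm V).orthogonal (D ⊓ (pairForm V).orthogonal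
      ((LinearMap.ker φ).map (LinearMap.inl ℝ V (Dual ℝ V)))) := by
  rintro ⟨u, α⟩ ⟨hu, hα⟩
  rw [SetLike.mem_coe, mem_orthogonal_map_inl,
    ← LinearMap.range_dualMap_eq_dualAnnihilator_ker] at hα
  obtain ⟨γ, rfl⟩ := hα
  rw [pairForm_dualMap]
  exact mem_orthogonal_forwardD.1 h u γ hu

theorem orthogonal_forwardD (φ : V →ₗ[ℝ] W) [FiniteDimensional ℝ (LinearMap.ker φ)]
    (D : Submodule ℝ (V × Dual ℝ V)) :
    (pairForm W).orthogonal (forwardD φ D) = forwardD φ ((pairForm V).orthogonal D) := by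
  ext ⟨w, β⟩
  constructor
  · intro h
    obtain ⟨v, rfl⟩ := fst_mem_range_of_mem_orthogonal_forwardD h
    have mem_sup := mem_orthogonal_inf_of_mem_orthogonal_forwardD h
    rw [orthogonal_inf_orthogonal isRefl_pairForm, Submodule.mem_sup] at mem_sup
    obtain ⟨⟨u, α⟩, hu, _, ⟨k, hk, rfl⟩, huk⟩ := mem_sup
    obtain ⟨rfl, rfl⟩ : u + k = v ∧ α = φ.dualMap β := by simpa using huk
    exact mem_forwardD.2 ⟨u, hu, by rw [map_add, LinearMap.mem_ker.1 hk, add_zero]⟩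
  · intro h
    obtain ⟨v, hv, rfl⟩ := mem_forwardD.1 h
    refine mem_orthogonal_forwardD.2 fun u γ hu => ?_
    rw [← pairForm_dualMap]
    exact hv (u, φ.dualMap γ) hu

end Forward

theorem stmt9_general {V W : Type*} [AddCommGroup V] [Module ℝ V] [AddCommGroup W] [Module ℝ W]
    (φ : V →ₗ[ℝ] W) [FiniteDimensional ℝ (LinearMap.ker φ)]
    (D : Submodule ℝ (V × Module.Dual ℝ V)) (hD : IsDirac D) :
    IsDirac (forwardD φ D) := by
  rw [isDirac_iff_orthogonal_eq] at hD ⊢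
  rw [orthogonal_forwardD, hD]

theorem stmt9 {V W : Type*} [AddCommGroup V] [Module ℝ V] [AddCommGroup W] [Module ℝ W]
    [FiniteDimensional ℝ V] [FiniteDimensional ℝ W]
    (φ : V →ₗ[ℝ] W) (D : Submodule ℝ (V × Module.Dual ℝ V)) (hD : IsDirac D) :
    IsDirac (forwardD φ D) :=
  stmt9_general φ D hD
end
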